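/- For a simple matroid M of rank r on a linearly ordered ground set, the nbc-monomials ω_T (images in A(M) of e_T for nbc-sets T) form a vector space basis of the Orlik–Solomon algebra A(M) = Λ(k^E)/I(M). -/

import Mathlib

open scoped Classical

/-- A circuit of a matroid: a minimal dependent set. -/
def Matroid.IsCircuitF {α : Type*} (M : Matroid α) (C : Finset α) : Prop :=
  M.Dep ↑C ∧ ∀ D ⊂ C, M.Indep ↑D

/-- A broken circuit: a circuit with its minimum element removed. -/
def Matroid.BrokenCircuit {α : Type*} [LinearOrder α] (M : Matroid α) (B : Finset α) : Prop :=
  ∃ C : Finset α, M.IsCircuitF C ∧ ∃ h : C.Nonempty, B = C.erase (C.min' h)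

/-- An nbc-set: a set containing no broken circuit. -/
def Matroid.NbcSet {α : Type*} [LinearOrder α] (M : Matroid α) (I : Finset α) : Prop :=
  ∀ B : Finset α, M.BrokenCircuit B → ¬ B ⊆ I

/-- The rank of a set in a matroid: the largest size of an independent subset. -/
noncomputable def Matroid.mrk {α : Type*} (M : Matroid α) (X : Set α) : ℕ :=
  sSup {n | ∃ I : Finset α, M.Indep ↑I ∧ ↑I ⊆ X ∧ I.card = n}

/-- The exterior monomial indexed by a list of ground-set elements. -/
noncomputable def eMon {α : Type*} [DecidableEq α] (K : Type*) [Field K] (l : List α) :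
    ExteriorAlgebra K (α → K) :=
  (l.map fun i => ExteriorAlgebra.ι K (Pi.single i (1 : K))).prod

/-- The exterior monomial of a finite set, taken in increasing order. -/
noncomputable def eFin {α : Type*} [LinearOrder α] (K : Type*) [Field K] (S : Finset α) :
    ExteriorAlgebra K (α → K) :=
  eMon K (S.sort (· ≤ ·))

/-- The boundary `∂ e_S` of the exterior monomial of a finite set. -/
noncomputable def bdMon {α : Type*} [LinearOrder α] (K : Type*) [Field K] (S : Finset α) :
    ExteriorAlgebra K (α → K) :=
  ∑ j ∈ Finset.range S.card, (-1 : K) ^ j • eMon K ((S.sort (· ≤ ·)).eraseIdx j)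

/-- The Orlik–Solomon relations: each `∂ e_C`, for a circuit `C`, is set to zero. -/
def OSRel {α : Type*} [LinearOrder α] (K : Type*) [Field K] (M : Matroid α)
    (x y : ExteriorAlgebra K (α → K)) : Prop :=
  (∃ C : Finset α, M.IsCircuitF C ∧ x = bdMon K C) ∧ y = 0

/-- The Orlik–Solomon algebra `A(M) = Λ(k^E)/I(M)`. -/
abbrev OSAlg {α : Type*} [LinearOrder α] (K : Type*) [Field K] (M : Matroid α) :=
  RingQuot (OSRel K M)

/-- `ω_T`, the image of `e_T` in the Orlik–Solomon algebra. -/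
noncomputable def omegaT {α : Type*} [LinearOrder α] (K : Type*) [Field K] (M : Matroid α)
    (T : Finset α) : OSAlg K M :=
  RingQuot.mkAlgHom K (OSRel K M) (eFin K T)

/-!
*Independence.* Fix an nbc-set `T` and let the level of `x` be the largest `t ∈ T` with `x` in the
closure of `{s ∈ T | t ≤ s}`. On any circuit the minimal level is attained twice, because each
element of a circuit lies in the closure of the others. Hence `e_x ↦ e_{level x}` kills every
`∂ e_C` and induces a homomorphism from `A(M)` to an exterior algebra. It fixes the labels of `T`,
and it sends no `ω_S` with `S ≠ T` an nbc-set to `± e_T`: if `S` had the same levels as `T`, then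
for each `t ∈ T` the elements of `S` of level at least `t` would span the same flat as
`{s ∈ T | t ≤ s}`, and comparing the smallest elements of these flats gives `t ∈ S`. So the
coefficient of `e_T` separates `ω_T` from the other nbc-monomials.

*Spanning.* If `S` contains the broken circuit `C \ {c}`, the relation `∂ e_C = 0` expresses `ω_S`
through monomials in which some `x ∈ C \ {c}` is replaced by `c < x`; these precede `S` in the
colexicographic order.
-/

namespace OrlikSolomon

open Set Finset

section SortedLists

variable {α β : Type*} [LinearOrder α] {f : α → β} {S : Finset α}

lemma eraseIdx_idxOf_sort (S : Finset α) (x : α) :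
    (S.sort (· ≤ ·)).eraseIdx ((S.sort (· ≤ ·)).idxOf x) = (S.erase x).sort (· ≤ ·) := by
  rw [List.eraseIdx_idxOf_eq_erase]
  have hsort := (List.toFinset_sort (· ≤ ·) ((sort_nodup S (· ≤ ·)).erase x)).2
    ((pairwise_sort S _).sublist List.erase_sublist)
  rw [← hsort]
  congr 1
  ext y
  simp [(sort_nodup S _).mem_erase_iff]

lemma nodup_map_sort_iff_injOn : ((S.sort (· ≤ ·)).map f).Nodup ↔ Set.InjOn f S := by
  simp [List.nodup_map_iff_inj_on (sort_nodup S (· ≤ ·)), Set.InjOn]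

variable [LinearOrder β]

lemma toFinset_map_sort : ((S.sort (· ≤ ·)).map f).toFinset = S.image f := by
  ext
  simp

lemma map_sort_of_strictMonoOn (hf : StrictMonoOn f S) :
    (S.sort (· ≤ ·)).map f = (S.image f).sort (· ≤ ·) := by
  rw [← toFinset_map_sort, (List.toFinset_sort _ (nodup_map_sort_iff_injOn.2 hf.injOn)).2]
  exact List.pairwise_map.2 <| (pairwise_sort S _).imp_of_mem fun ha hb hab =>
    hf.monotoneOn ((mem_sort _).1 ha) ((mem_sort _).1 hb) hab

end SortedLists

section ExteriorMonomials

variable {α : Type*} {K : Type*} [Field K]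

section DecidableEq

variable [DecidableEq α]

lemma eMon_append (l m : List α) : eMon K (l ++ m) = eMon K l * eMon K m := by
  simp [eMon]

lemma eMon_eq_ιMulti (l : List α) :
    eMon K l = ExteriorAlgebra.ιMulti K l.length fun i => Pi.single (l.get i) 1 := by
  rw [ExteriorAlgebra.ιMulti_apply, eMon]
  exact congrArg List.prod (List.ext_get (by simp) (by simp))

lemma eMon_eq_zero_of_not_nodup {l : List α} (hl : ¬ l.Nodup) : eMon K l = 0 := by
  rw [eMon_eq_ιMulti]
  refine ExteriorAlgebra.ιMulti_eq_zero_of_not_inj fun hinj => hl ?_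
  exact List.nodup_iff_injective_get.2 fun i j hij => hinj (congrArg (Pi.single · 1) hij)

lemma eMon_eq_or_eq_neg_of_perm {l m : List α} (h : l.Perm m) :
    eMon K l = eMon K m ∨ eMon K l = -eMon K m := by
  induction h with
  | nil => exact .inl rfl
  | cons x _ ih =>
    simp only [eMon, List.map_cons, List.prod_cons] at ih ⊢
    rcases ih with h | h <;> simp [h]
  | swap x y l =>
    right
    simp only [eMon, List.map_cons, List.prod_cons, ← mul_assoc]
    rw [eq_neg_of_add_eq_zero_left (ExteriorAlgebra.ι_add_mul_swap _ _), neg_mul]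
  | trans _ _ ih₁ ih₂ => rcases ih₁ with h₁ | h₁ <;> rcases ih₂ with h₂ | h₂ <;> simp [h₁, h₂]

end DecidableEq

variable [LinearOrder α]

lemma eMon_eq_or_eq_neg_eFin {l : List α} (hl : l.Nodup) :
    eMon K l = eFin K l.toFinset ∨ eMon K l = -eFin K l.toFinset :=
  eMon_eq_or_eq_neg_of_perm <|
    (List.perm_ext_iff_of_nodup hl (sort_nodup _ _)).2 fun x => by simp

lemma eFin_mul_eFin_of_disjoint {S T : Finset α} (h : Disjoint S T) :
    eFin K S * eFin K T = eFin K (S ∪ T) ∨ eFin K S * eFin K T = -eFin K (S ∪ T) := by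
  have hnodup : (S.sort (· ≤ ·) ++ T.sort (· ≤ ·)).Nodup :=
    (sort_nodup _ _).append (sort_nodup _ _) fun x hS hT =>
      Finset.disjoint_left.1 h ((mem_sort _).1 hS) ((mem_sort _).1 hT)
  have hsign := eMon_eq_or_eq_neg_eFin (K := K) hnodup
  rwa [eMon_append, List.toFinset_append, sort_toFinset, sort_toFinset] at hsign

lemma eFin_mul_eFin_of_not_disjoint {S T : Finset α} (h : ¬ Disjoint S T) :
    eFin K S * eFin K T = 0 := by
  obtain ⟨x, hS, hT⟩ := Finset.not_disjoint_iff.1 h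
  rw [eFin, eFin, ← eMon_append]
  refine eMon_eq_zero_of_not_nodup fun hnodup => ?_
  exact (List.disjoint_of_nodup_append hnodup) ((mem_sort _).2 hS) ((mem_sort _).2 hT)

lemma basisFun_exteriorAlgebra_apply [Finite α] (S : Finset α) :
    (Pi.basisFun K α).ExteriorAlgebra S = eFin K S := by
  rw [ExteriorAlgebra.basis_apply_ofCard _ rfl, ExteriorAlgebra.ιMulti_family,
    ExteriorAlgebra.ιMulti_apply, eFin, eMon, ← listMap_orderEmbOfFin_finRange S rfl,
    List.map_map, List.ofFn_eq_map]
  refine congrArg List.prod (List.map_congr_left fun i _ => ?_)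
  simp [Set.powersetCard.ofFinEmbEquiv_symm_apply, Set.powersetCard.ofCard]

lemma span_range_eFin [Finite α] : Submodule.span K (Set.range (eFin K (α := α))) = ⊤ := by
  rw [← funext basisFun_exteriorAlgebra_apply]
  exact Module.Basis.span_eq _

lemma bdMon_eq_sum_erase (S : Finset α) :
    bdMon K S = ∑ x ∈ S, (-1 : K) ^ (S.sort (· ≤ ·)).idxOf x • eFin K (S.erase x) := by
  symm
  refine sum_bij (fun x _ => (S.sort (· ≤ ·)).idxOf x) (fun x hx => ?_) (fun x hx y _ h => ?_)
    (fun j hj => ?_) (fun x _ => by rw [eraseIdx_idxOf_sort, eFin])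
  · simpa using List.idxOf_lt_length_of_mem ((mem_sort (· ≤ ·)).2 hx)
  · exact (List.idxOf_inj ((mem_sort _).2 hx)).1 h
  · have hj' : j < (S.sort (· ≤ ·)).length := by simpa using hj
    exact ⟨(S.sort (· ≤ ·))[j], (mem_sort _).1 (List.getElem_mem hj'),
      (sort_nodup S _).idxOf_getElem j hj'⟩

end ExteriorMonomials

section Contraction

open CliffordAlgebra

lemma contractLeft_prod_map_ι {R V : Type*} [CommRing R] [AddCommGroup V] [Module R V]
    (Q : QuadraticForm R V) (d : Module.Dual R V) (l : List V) :
    contractLeft d (l.map (ι Q)).prod =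
      ∑ j : Fin l.length, ((-1) ^ (j : ℕ) * d l[j]) • ((l.eraseIdx j).map (ι Q)).prod := by
  induction l with
  | nil => simp [contractLeft_one]
  | cons v l ih =>
    rw [List.map_cons, List.prod_cons, contractLeft_ι_mul, ih, sub_eq_add_neg, mul_sum,
      ← Finset.sum_neg_distrib]
    simp [Fin.sum_univ_succ, pow_succ]

variable {α K : Type*} [Finite α] [DecidableEq α] [Field K]

lemma contractLeft_eMon (l : List α) :
    contractLeft (Q := (0 : QuadraticForm K (α → K))) ((Pi.basisFun K α).constr K fun _ => 1)
        (eMon K l) =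
      ∑ j ∈ range l.length, (-1 : K) ^ j • eMon K (l.eraseIdx j) := by
  set d : Module.Dual K (α → K) := (Pi.basisFun K α).constr K fun _ => 1
  have hd (i : α) : d (Pi.single i 1) = 1 := by
    rw [← Pi.basisFun_apply, Module.Basis.constr_basis]
  have h := contractLeft_prod_map_ι (0 : QuadraticForm K (α → K)) d
    (l.map fun i => Pi.single i 1)
  simp only [List.map_map, List.eraseIdx_map] at h
  refine h.trans ?_
  rw [← Fin.sum_univ_eq_sum_range (fun j => (-1 : K) ^ j • eMon K (l.eraseIdx j))]
  refine Fintype.sum_equiv (finCongr (by simp)) _ _ fun j => ?_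
  simp [hd, eMon, Function.comp_def]

end Contraction

section Relabel

variable {α β : Type*} [Finite α] [DecidableEq β] (K : Type*) [Field K]

/-- The homomorphism of exterior algebras sending the generator `e_i` to `e_{f i}`. -/
noncomputable def relabel (f : α → β) :
    ExteriorAlgebra K (α → K) →ₐ[K] ExteriorAlgebra K (β → K) :=
  ExteriorAlgebra.map ((Pi.basisFun K α).constr K fun i => Pi.single (f i) (1 : K))

variable {K}

lemma relabel_eMon [DecidableEq α] (f : α → β) (l : List α) :
    relabel K f (eMon K l) = eMon K (l.map f) := by
  simp only [relabel, eMon, map_list_prod, List.map_map]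
  congr! 2
  ext i
  rw [Function.comp_apply, Function.comp_apply, ExteriorAlgebra.map_apply_ι, ← Pi.basisFun_apply,
    Module.Basis.constr_basis]

lemma relabel_bdMon [LinearOrder α] (f : α → β) (S : Finset α) :
    relabel K f (bdMon K S) =
      ∑ j ∈ range S.card, (-1 : K) ^ j • eMon K (((S.sort (· ≤ ·)).map f).eraseIdx j) := by
  simp [bdMon, relabel_eMon, List.eraseIdx_map]

/- `∂` is contraction with the sum of the coordinates, hence is determined by the product `e_S`;
relabelling makes two factors of that product equal. -/
lemma relabel_bdMon_eq_zero [LinearOrder α] [Finite β] {f : α → β} {S : Finset α}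
    (hf : ¬ Set.InjOn f S) : relabel K f (bdMon K S) = 0 := by
  have hzero : eMon K ((S.sort (· ≤ ·)).map f) = 0 :=
    eMon_eq_zero_of_not_nodup (mt nodup_map_sort_iff_injOn.1 hf)
  have hcontract := contractLeft_eMon (K := K) ((S.sort (· ≤ ·)).map f)
  rw [hzero, map_zero, List.length_map, length_sort] at hcontract
  rw [relabel_bdMon, ← hcontract]

end Relabel

section BrokenCircuits

variable {α : Type*} {M : Matroid α}

lemma isCircuitF_iff_isCircuit {C : Finset α} : M.IsCircuitF C ↔ M.IsCircuit (C : Set α) := by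
  rw [Matroid.isCircuit_iff_forall_ssubset]
  refine and_congr_right fun _ => ⟨fun h I hI => ?_, fun h D hD => h (by exact_mod_cast hD)⟩
  lift I to Finset α using C.finite_toSet.subset hI.subset
  exact h I (by exact_mod_cast hI)

lemma closure_eq_closure_of_card_le {X Y : Finset α} (hY : M.Indep (Y : Set α))
    (hYX : (Y : Set α) ⊆ M.closure X) (hcard : X.card ≤ Y.card) :
    M.closure (Y : Set α) = M.closure X := by
  have hrk : M.eRk (M.closure X) ≤ M.eRk Y := by
    rw [M.eRk_closure_eq, hY.eRk_eq_encard]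
    exact (M.eRk_le_encard X).trans (by simpa using hcard)
  simpa using (hY.isBasis'_of_eRk_ge Y.finite_toSet hYX hrk).closure_eq_closure

variable [LinearOrder α] {S T : Finset α}

lemma nbcSet_of_subset (hT : M.NbcSet T) (hST : S ⊆ T) : M.NbcSet S :=
  fun B hB hBS => hT B hB (hBS.trans hST)

lemma indep_of_nbcSet (hT : M.NbcSet T) (hTE : (T : Set α) ⊆ M.E) : M.Indep (T : Set α) := by
  by_contra h
  obtain ⟨C, hCT, hC⟩ := ((Matroid.not_indep_iff hTE).1 h).exists_isCircuit_subset
  lift C to Finset α using T.finite_toSet.subset hCT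
  exact hT _ ⟨C, isCircuitF_iff_isCircuit.2 hC, by exact_mod_cast hC.nonempty, rfl⟩
    ((erase_subset _ _).trans (by exact_mod_cast hCT))

lemma exists_le_of_mem_closure (hT : M.NbcSet T) {x : α} (hx : x ∈ M.closure T) :
    ∃ y ∈ T, y ≤ x := by
  by_contra! hlt
  have hxT : x ∉ (T : Set α) := fun h => (hlt x h).false
  obtain ⟨C, hCT, hC, hxC⟩ := Matroid.exists_isCircuit_of_mem_closure hx hxT
  lift C to Finset α using (T.finite_toSet.insert x).subset hCT
  have hxmin : C.min' ⟨x, hxC⟩ = x :=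
    le_antisymm (min'_le _ _ hxC) <| le_min' _ _ _ fun y hy =>
      (hCT hy).elim (fun h => h.ge) fun h => (hlt y h).le
  refine hT _ ⟨C, isCircuitF_iff_isCircuit.2 hC, ⟨x, hxC⟩, rfl⟩ fun y hy => ?_
  rw [hxmin, Finset.mem_erase] at hy
  exact (hCT hy.2).resolve_left hy.1

variable (M T) in
/-- The level of `x` with respect to `T`: the largest `t ∈ T` such that `x` lies in the closure of
the elements of `T` that are at least `t`, and `⊥` if there is no such `t`. -/
noncomputable def level (x : α) : WithBot α :=
  {t ∈ T | x ∈ M.closure (T.filter (t ≤ ·) : Finset α)}.max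

lemma coe_le_level_iff (hT : M.NbcSet T) {t x : α} :
    (t : WithBot α) ≤ level M T x ↔ x ∈ M.closure (T.filter (t ≤ ·) : Finset α) := by
  constructor
  · intro h
    obtain ⟨u, hu⟩ := WithBot.ne_bot_iff_exists.1 (ne_bot_of_le_ne_bot WithBot.coe_ne_bot h)
    have htu : t ≤ u := by rwa [← hu, WithBot.coe_le_coe] at h
    refine M.closure_subset_closure ?_ (mem_filter.1 (mem_of_max hu.symm)).2
    exact_mod_cast monotone_filter_right T fun s _ hus => htu.trans hus
  · intro h
    obtain ⟨y, hy, -⟩ := exists_le_of_mem_closure (nbcSet_of_subset hT (filter_subset _ _)) h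
    set u := (T.filter (t ≤ ·)).min' ⟨y, hy⟩
    have hu : u ∈ T ∧ t ≤ u := mem_filter.1 (min'_mem _ _)
    have hx : x ∈ M.closure (T.filter (u ≤ ·) : Finset α) := by
      refine M.closure_subset_closure ?_ h
      exact_mod_cast fun s hs => mem_filter.2 ⟨(mem_filter.1 hs).1, min'_le _ _ hs⟩
    exact (WithBot.coe_le_coe.2 hu.2).trans (le_max (mem_filter.2 ⟨hu.1, hx⟩))

lemma level_le_self (hT : M.NbcSet T) (x : α) : level M T x ≤ x := by
  cases hlevel : level M T x with
  | bot => exact bot_le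
  | coe t =>
    obtain ⟨y, hy, hyx⟩ := exists_le_of_mem_closure (nbcSet_of_subset hT (filter_subset _ _))
      ((coe_le_level_iff hT).1 hlevel.ge)
    exact WithBot.coe_le_coe.2 ((mem_filter.1 hy).2.trans hyx)

lemma level_of_mem (hT : M.NbcSet T) {t : α} (ht : t ∈ T) (htE : t ∈ M.E) : level M T t = t :=
  (level_le_self hT t).antisymm <| (coe_le_level_iff hT).2 <|
    M.mem_closure_of_mem' (by simpa using ht)

lemma strictMonoOn_level (hT : M.NbcSet T) (hTE : (T : Set α) ⊆ M.E) :
    StrictMonoOn (level M T) T := fun s hs t ht hst => by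
  rwa [level_of_mem hT hs (hTE hs), level_of_mem hT ht (hTE ht), WithBot.coe_lt_coe]

lemma not_injOn_level_of_isCircuitF (hT : M.NbcSet T) {C : Finset α} (hC : M.IsCircuitF C) :
    ¬ Set.InjOn (level M T) C := by
  intro hinj
  rw [isCircuitF_iff_isCircuit] at hC
  obtain ⟨c, hcC, hcmin⟩ := exists_min_image C (level M T) (by exact_mod_cast hC.nonempty)
  have hc : c ∈ M.closure (C.erase c : Finset α) := by
    simpa using hC.mem_closure_sdiff_singleton_of_mem hcC
  have hne : (C.erase c).Nonempty := by
    by_contra! hempty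
    rw [hempty] at hc
    simpa using exists_le_of_mem_closure (nbcSet_of_subset hT (empty_subset T)) hc
  obtain ⟨b, hb, hbmin⟩ := exists_min_image _ (level M T) hne
  obtain ⟨hbc, hbC⟩ := Finset.mem_erase.1 hb
  have hlt : level M T c < level M T b :=
    (hcmin b hbC).lt_of_ne fun h => hbc (hinj hbC hcC h.symm)
  obtain ⟨u, hu⟩ := WithBot.ne_bot_iff_exists.1 hlt.ne_bot
  have hsub : (C.erase c : Set α) ⊆ M.closure (T.filter (u ≤ ·) : Finset α) := fun x hx =>
    (coe_le_level_iff hT).1 (hu.trans_le (hbmin x (by exact_mod_cast hx)))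
  have huc : (u : WithBot α) ≤ level M T c := (coe_le_level_iff hT).2 <|
    M.closure_subset_closure_of_subset_closure hsub (by simpa using hc)
  exact (hu ▸ huc).not_gt hlt

lemma eq_of_image_level_eq (hS : M.NbcSet S) (hT : M.NbcSet T) (hSE : (S : Set α) ⊆ M.E)
    (hTE : (T : Set α) ⊆ M.E) (hinj : Set.InjOn (level M T) S)
    (himage : S.image (level M T) = T.image (level M T)) : S = T := by
  have hinjT : Set.InjOn (level M T) T := (strictMonoOn_level hT hTE).injOn
  have hcard : S.card = T.card := by
    rw [← card_image_of_injOn hinj, himage, card_image_of_injOn hinjT]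
  refine (eq_of_subset_of_card_le (fun t ht => ?_) hcard.le).symm
  set S' := S.filter ((t : WithBot α) ≤ level M T ·)
  set T' := T.filter (t ≤ ·)
  have hT' : T.filter ((t : WithBot α) ≤ level M T ·) = T' := filter_congr fun x hx => by
    rw [level_of_mem hT hx (hTE hx), WithBot.coe_le_coe]
  have hcard' : S'.card = T'.card := by
    rw [← card_image_of_injOn (hinj.mono (filter_subset _ _)), ← hT',
      ← card_image_of_injOn (hinjT.mono (filter_subset _ _)), ← filter_image, ← filter_image,
      himage]
  have hspan : M.closure (S' : Set α) = M.closure T' := by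
    refine closure_eq_closure_of_card_le ?_ (fun x hx => ?_) hcard'.ge
    · exact (indep_of_nbcSet hS hSE).subset (filter_subset _ _)
    · exact (coe_le_level_iff hT).1 (mem_filter.1 hx).2
  have htS' : t ∈ M.closure (S' : Set α) :=
    hspan ▸ M.mem_closure_of_mem' (by simp [T', ht]) (hTE ht)
  obtain ⟨y, hy, hyt⟩ := exists_le_of_mem_closure (nbcSet_of_subset hS (filter_subset _ _)) htS'
  obtain ⟨hyS, hty⟩ := mem_filter.1 hy
  have : t ≤ y := WithBot.coe_le_coe.1 (hty.trans (level_le_self hT y))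
  exact this.antisymm hyt ▸ hyS

end BrokenCircuits

section Independence

variable {α β : Type*} [Finite α] [LinearOrder α] [Finite β] [LinearOrder β] (K : Type*) [Field K]
  {M : Matroid α} {S T : Finset α}

/-- The homomorphism `ω_S ↦ ± e_{f(S)}` that `relabel` induces on the Orlik–Solomon algebra when `f`
is injective on no circuit. -/
noncomputable def relabelHom (f : α → β) (hf : ∀ C, M.IsCircuitF C → ¬ Set.InjOn f C) :
    OSAlg K M →ₐ[K] ExteriorAlgebra K (β → K) :=
  RingQuot.liftAlgHom K ⟨relabel K f, by
    rintro _ _ ⟨⟨C, hC, rfl⟩, rfl⟩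
    rw [relabel_bdMon_eq_zero (hf C hC), map_zero]⟩

variable {K} {f : α → β} (hf : ∀ C, M.IsCircuitF C → ¬ Set.InjOn f C)

lemma relabelHom_omegaT (S : Finset α) :
    relabelHom K f hf (omegaT K M S) = eMon K ((S.sort (· ≤ ·)).map f) := by
  rw [relabelHom, omegaT, RingQuot.liftAlgHom_mkAlgHom_apply, eFin, relabel_eMon]

lemma relabelHom_omegaT_eq_zero (hS : ¬ Set.InjOn f S) :
    relabelHom K f hf (omegaT K M S) = 0 := by
  rw [relabelHom_omegaT]
  exact eMon_eq_zero_of_not_nodup (mt nodup_map_sort_iff_injOn.1 hS)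

lemma relabelHom_omegaT_of_injOn (hS : Set.InjOn f S) :
    relabelHom K f hf (omegaT K M S) = eFin K (S.image f) ∨
      relabelHom K f hf (omegaT K M S) = -eFin K (S.image f) := by
  have hsign := eMon_eq_or_eq_neg_eFin (K := K) (nodup_map_sort_iff_injOn.2 hS)
  rwa [toFinset_map_sort, ← relabelHom_omegaT hf] at hsign

lemma relabelHom_omegaT_of_strictMonoOn (hS : StrictMonoOn f S) :
    relabelHom K f hf (omegaT K M S) = eFin K (S.image f) := by
  rw [relabelHom_omegaT, map_sort_of_strictMonoOn hS, eFin]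

lemma basisFun_exteriorAlgebra_coord_eFin (S T : Finset β) :
    (Pi.basisFun K β).ExteriorAlgebra.coord T (eFin K S) = if S = T then 1 else 0 := by
  rw [← basisFun_exteriorAlgebra_apply, Module.Basis.coord_apply, Module.Basis.repr_self,
    Finsupp.single_apply]

variable (K) in
/-- The functional dual to `ω_T` among the nbc-monomials: relabel by levels with respect to `T`,
then take the coefficient of the image of `e_T`. -/
noncomputable def levelDual (hT : M.NbcSet T) : Module.Dual K (OSAlg K M) :=
  (Pi.basisFun K (WithBot α)).ExteriorAlgebra.coord (T.image (level M T)) ∘ₗ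
    (relabelHom K (level M T) fun _ => not_injOn_level_of_isCircuitF hT).toLinearMap

lemma levelDual_omegaT_self (hT : M.NbcSet T) (hTE : (T : Set α) ⊆ M.E) :
    levelDual K hT (omegaT K M T) = 1 := by
  rw [levelDual, LinearMap.comp_apply, AlgHom.toLinearMap_apply,
    relabelHom_omegaT_of_strictMonoOn _ (strictMonoOn_level hT hTE),
    basisFun_exteriorAlgebra_coord_eFin, if_pos rfl]

lemma levelDual_omegaT_of_ne (hS : M.NbcSet S) (hT : M.NbcSet T) (hSE : (S : Set α) ⊆ M.E)
    (hTE : (T : Set α) ⊆ M.E) (hne : S ≠ T) : levelDual K hT (omegaT K M S) = 0 := by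
  rw [levelDual, LinearMap.comp_apply, AlgHom.toLinearMap_apply]
  by_cases hinj : Set.InjOn (level M T) S
  · have himage := mt (eq_of_image_level_eq hS hT hSE hTE hinj) hne
    rcases relabelHom_omegaT_of_injOn (K := K)
      (fun _ => not_injOn_level_of_isCircuitF hT) hinj with h | h
    · rw [h, basisFun_exteriorAlgebra_coord_eFin, if_neg himage]
    · rw [h, map_neg, basisFun_exteriorAlgebra_coord_eFin, if_neg himage, neg_zero]
  · rw [relabelHom_omegaT_eq_zero _ hinj, map_zero]

variable (K) in
theorem linearIndependent_omegaT (hE : M.E = Set.univ) :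
    LinearIndependent K fun T : {T : Finset α // M.NbcSet T} => omegaT K M T.1 := by
  have hsub (T : Finset α) : (T : Set α) ⊆ M.E := hE ▸ Set.subset_univ _
  exact .of_pairwise_dual_eq_zero_one _ (fun T => levelDual K T.2)
    (fun T S hTS => levelDual_omegaT_of_ne S.2 T.2 (hsub _) (hsub _)
      (Subtype.coe_ne_coe.2 hTS.symm))
    fun T => levelDual_omegaT_self T.2 (hsub _)

end Independence

section Spanning

variable {α : Type*} [LinearOrder α] (K : Type*) [Field K] {M : Matroid α}
  {C S : Finset α} {c : α}

lemma sum_omegaT_erase_eq_zero (hC : M.IsCircuitF C) :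
    ∑ x ∈ C, (-1 : K) ^ (C.sort (· ≤ ·)).idxOf x • omegaT K M (C.erase x) = 0 := by
  have h := RingQuot.mkAlgHom_rel K (show OSRel K M (bdMon K C) 0 from ⟨⟨C, hC, rfl⟩, rfl⟩)
  rw [bdMon_eq_sum_erase, map_sum, map_zero] at h
  simpa only [omegaT, map_smul] using h

lemma omegaT_erase_mem_span (hC : M.IsCircuitF C) (hc : c ∈ C) :
    omegaT K M (C.erase c) ∈
      Submodule.span K ((fun x => omegaT K M (C.erase x)) '' (C.erase c)) := by
  have hsum := sum_omegaT_erase_eq_zero K hC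
  rw [← add_sum_erase C _ hc] at hsum
  rw [← Submodule.smul_mem_iff _ (pow_ne_zero _ (neg_ne_zero.2 one_ne_zero) : (-1 : K) ^ _ ≠ 0),
    eq_neg_of_add_eq_zero_left hsum]
  exact neg_mem <| sum_mem fun x hx => Submodule.smul_mem _ _ <|
    Submodule.subset_span <| Set.mem_image_of_mem _ hx

lemma omegaT_mul_omegaT_mem_span (S T : Finset α) :
    omegaT K M S * omegaT K M T ∈ Submodule.span K {omegaT K M (S ∪ T)} := by
  simp only [omegaT, ← map_mul]
  by_cases h : Disjoint S T
  · rcases eFin_mul_eFin_of_disjoint (K := K) h with h | h <;>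
    simp [h, Submodule.mem_span_singleton_self]
  · simp [eFin_mul_eFin_of_not_disjoint h]

lemma omegaT_union_mem_span {S T : Finset α} (h : Disjoint S T) :
    omegaT K M (S ∪ T) ∈ Submodule.span K {omegaT K M S * omegaT K M T} := by
  simp only [omegaT, ← map_mul]
  rcases eFin_mul_eFin_of_disjoint (K := K) h with h | h
  · rw [h]
    exact Submodule.mem_span_singleton_self _
  · rw [h, map_neg]
    exact Submodule.mem_span_singleton.2 ⟨-1, by simp⟩

lemma omegaT_mem_span_insert_erase (hC : M.IsCircuitF C) (hc : c ∈ C) (hCS : C.erase c ⊆ S) :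
    omegaT K M S ∈
      Submodule.span K ((fun x => omegaT K M (insert c (S.erase x))) '' (C.erase c)) := by
  set R := S \ C.erase c
  have hunion : ∀ x ∈ C.erase c, C.erase x ∪ R = insert c (S.erase x) := by
    intro x hx
    ext y
    have := @hCS y
    grind
  have hprod : omegaT K M S ∈ Submodule.span K {omegaT K M (C.erase c) * omegaT K M R} := by
    simpa only [R, union_sdiff_of_subset hCS] using
      omegaT_union_mem_span K (M := M) (disjoint_sdiff (s := C.erase c) (t := S))
  refine Submodule.span_le.2 (Set.singleton_subset_iff.2 ?_) hprod
  have hmul := Submodule.mem_map_of_mem (f := LinearMap.mulRight K (omegaT K M R))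
    (omegaT_erase_mem_span K hC hc)
  rw [Submodule.map_span, Set.image_image] at hmul
  refine Submodule.span_le.2 ?_ hmul
  rintro _ ⟨x, hx, rfl⟩
  refine Submodule.span_mono ?_ (omegaT_mul_omegaT_mem_span K (C.erase x) R)
  exact Set.singleton_subset_iff.2 ⟨x, hx, by rw [hunion x hx]⟩

lemma omegaT_mem_span_of_not_nbcSet (hS : ¬ M.NbcSet S) :
    omegaT K M S ∈ Submodule.span K (omegaT K M '' {U | toColex U < toColex S}) := by
  simp only [Matroid.NbcSet, not_forall, not_not] at hS
  obtain ⟨_, ⟨C, hC, hne, rfl⟩, hCS⟩ := hS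
  refine Submodule.span_mono ?_ (omegaT_mem_span_insert_erase K hC (C.min'_mem hne) hCS)
  rintro _ ⟨x, hx, rfl⟩
  have hlt : C.min' hne < x := min'_lt_of_mem_erase_min' C hne hx
  refine ⟨_, Finset.Colex.toColex_lt_toColex_iff_exists_forall_lt.2
    ⟨x, hCS hx, ?_, fun b hb hbS => ?_⟩, rfl⟩
  · simp [hlt.ne']
  · obtain rfl | hb := Finset.mem_insert.1 hb
    · exact hlt
    · exact absurd (mem_of_mem_erase hb) hbS

variable [Finite α] (M)

lemma omegaT_mem_span_nbcSet (S : Finset α) :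
    omegaT K M S ∈
      Submodule.span K (Set.range fun T : {T : Finset α // M.NbcSet T} => omegaT K M T.1) := by
  have : Finite (Colex (Finset α)) := .of_equiv _ toColex
  induction hU : toColex S using WellFoundedLT.induction generalizing S with
  | ind U ih =>
    subst hU
    by_cases hS : M.NbcSet S
    · exact Submodule.subset_span ⟨⟨S, hS⟩, rfl⟩
    · refine Submodule.span_le.2 ?_ (omegaT_mem_span_of_not_nbcSet K hS)
      rintro _ ⟨U, hU, rfl⟩
      exact ih _ hU U rfl

theorem span_omegaT_eq_top :
    Submodule.span K (Set.range fun T : {T : Finset α // M.NbcSet T} => omegaT K M T.1) = ⊤ := by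
  have hrange : Submodule.span K (Set.range (omegaT K M)) = ⊤ := by
    rw [show omegaT K M = (RingQuot.mkAlgHom K (OSRel K M)).toLinearMap ∘ eFin K from rfl,
      Set.range_comp, ← Submodule.map_span, span_range_eFin, Submodule.map_top,
      LinearMap.range_eq_top]
    exact RingQuot.mkAlgHom_surjective K _
  rw [eq_top_iff, ← hrange, Submodule.span_le]
  rintro _ ⟨S, rfl⟩
  exact omegaT_mem_span_nbcSet K M S

end Spanning

end OrlikSolomon

theorem stmt_13_general {α : Type*} [Finite α] [LinearOrder α] (K : Type*) [Field K]
    (M : Matroid α) (hE : M.E = Set.univ) :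
    LinearIndependent K (fun T : {T : Finset α // M.NbcSet T} => omegaT K M T.1) ∧
      Submodule.span K
        (Set.range fun T : {T : Finset α // M.NbcSet T} => omegaT K M T.1) = ⊤ :=
  ⟨OrlikSolomon.linearIndependent_omegaT K hE, OrlikSolomon.span_omegaT_eq_top K M⟩

/-- The nbc-monomials form a vector space basis of the Orlik–Solomon algebra of a
simple matroid. -/
theorem stmt_13 {α : Type*} [Fintype α] [LinearOrder α] (K : Type*) [Field K]
    (M : Matroid α) (hE : M.E = Set.univ) (hSimple : ∀ i j : α, M.Indep {i, j}) :
    LinearIndependent K (fun T : {T : Finset α // M.NbcSet T} => omegaT K M T.1) ∧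
      Submodule.span K
        (Set.range fun T : {T : Finset α // M.NbcSet T} => omegaT K M T.1) = ⊤ := by
  exact stmt_13_general K M hE
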